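/- arXiv:2408.11773 — 3 statements merged into one kernel-verified Lean document; each statement's English description precedes it below -/
import Mathlib

section
/- Fix N ≥ 1, q₀ ∈ ℝ, κ ≥ 0 and α > 0. Define F(u,v) = Σ_{t=1}^N (κ u_t Σ_{j=1}^t (u_j + v_j) + α u_t²) + Σ_{t=1}^N (κ v_t Σ_{j=1}^t (u_j + v_j) + α v_t²) for u, v ∈ ℝ^N. Then for every (u,v) with Σ_{t=1}^N u_t = q₀ and Σ_{t=1}^N v_t = q₀ one has F(u,v) ≥ F(c,c), where c ∈ ℝ^N is the constant vector c_t = q₀/N, and equality holds if and only if u = v = c. In other words, the TWAP pair is the unique minimizer of the joint expected implementation shortfall over the admissible set. -/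
open Finset

/-- The joint expected implementation shortfall of the two agents in the two-player
Almgren–Chriss market impact game:
`F(u,v) = Σ_{t=1}^N (κ u_t Σ_{j=1}^t (u_j + v_j) + α u_t²)
        + Σ_{t=1}^N (κ v_t Σ_{j=1}^t (u_j + v_j) + α v_t²)`,
with `t = 1, …, N` encoded by `t : Fin N` and `Σ_{j=1}^t` by the sum over `j ∈ Iic t`. -/
noncomputable def jointCost (N : ℕ) (κ α : ℝ) (u v : Fin N → ℝ) : ℝ :=
  (∑ t : Fin N, (κ * u t * (∑ j ∈ Iic t, (u j + v j)) + α * (u t) ^ 2)) +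
  (∑ t : Fin N, (κ * v t * (∑ j ∈ Iic t, (u j + v j)) + α * (v t) ^ 2))

lemma two_mul_sum_Iic (N : ℕ) (w : Fin N → ℝ) :
    2 * ∑ t, w t * ∑ j ∈ Iic t, w j = (∑ t, w t) ^ 2 + ∑ t, w t ^ 2 := by
  have h1 : ∑ t, w t * ∑ j ∈ Iic t, w j = ∑ t, ∑ j, if j ≤ t then w t * w j else 0 := by
    refine sum_congr rfl fun t _ => ?_
    rw [← sum_filter, mul_sum]
    refine sum_congr ?_ fun _ _ => rfl
    ext j
    simp
  have h2 : ∑ t, w t * ∑ j ∈ Iic t, w j = ∑ t, ∑ j, if t ≤ j then w t * w j else 0 := by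
    rw [h1, sum_comm]
    refine sum_congr rfl fun t _ => sum_congr rfl fun j _ => ?_
    rw [mul_comm]
  have h3 : ∑ t, w t ^ 2 = ∑ t, ∑ j, if t = j then w t * w j else 0 := by
    refine sum_congr rfl fun t _ => ?_
    simp [sq]
  rw [two_mul]
  nth_rewrite 1 [h1]
  rw [h2, h3, sq, sum_mul_sum, ← sum_add_distrib, ← sum_add_distrib]
  refine sum_congr rfl fun t _ => ?_
  rw [← sum_add_distrib, ← sum_add_distrib]
  refine sum_congr rfl fun j _ => ?_
  rcases lt_trichotomy t j with h | h | h
  · simp [h.le, h.ne, not_le.2 h]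
  · simp [h]
  · simp [h.le, h.ne', not_le.2 h]

lemma jointCost_eq (N : ℕ) (κ α : ℝ) (u v : Fin N → ℝ) :
    jointCost N κ α u v = κ / 2 * ((∑ t, u t + ∑ t, v t) ^ 2 + ∑ t, (u t + v t) ^ 2)
      + α * (∑ t, u t ^ 2 + ∑ t, v t ^ 2) := by
  have h := two_mul_sum_Iic N (fun t => u t + v t)
  simp only [] at h
  rw [← sum_add_distrib, ← h]
  unfold jointCost
  simp only [mul_add, mul_sum (s := univ), ← sum_add_distrib]
  refine sum_congr rfl fun t _ => ?_
  ring

lemma sum_sq_dev (N : ℕ) (w : Fin N → ℝ) (a : ℝ) (h : ∑ t, w t = N * a) :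
    ∑ t, w t ^ 2 = N * a ^ 2 + ∑ t, (w t - a) ^ 2 := by
  simp only [sub_sq, sum_add_distrib, sum_sub_distrib, ← sum_mul, ← mul_sum, h]
  simp
  ring

/-- **Pareto optimal strategy (TWAP is the unique joint-cost minimizer).**
Fix `N ≥ 1`, `q₀ ∈ ℝ`, `κ ≥ 0`, `α > 0`. For every pair `(u, v)` with
`Σ u_t = q₀` and `Σ v_t = q₀` one has `F(u,v) ≥ F(c,c)` where `c_t = q₀ / N` is the
TWAP vector, with equality if and only if `u = v = c`. -/
theorem twap_unique_minimizer (N : ℕ) (hN : 1 ≤ N) (q₀ κ α : ℝ)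
    (hκ : 0 ≤ κ) (hα : 0 < α)
    (c : Fin N → ℝ) (hc : ∀ t, c t = q₀ / N) :
    ∀ u v : Fin N → ℝ, (∑ t, u t) = q₀ → (∑ t, v t) = q₀ →
      jointCost N κ α c c ≤ jointCost N κ α u v ∧
      (jointCost N κ α u v = jointCost N κ α c c ↔ (u = c ∧ v = c)) := by
  intro u v hu hv
  have hN0 : (N : ℝ) ≠ 0 := by positivity
  obtain rfl : c = fun _ => q₀ / N := funext hc
  have hq : (N : ℝ) * (q₀ / N) = q₀ := by field_simp
  have key : jointCost N κ α u v = jointCost N κ α (fun _ => q₀ / N) (fun _ => q₀ / N) +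
      (κ / 2 * ∑ t, (u t + v t - 2 * (q₀ / N)) ^ 2
        + α * (∑ t, (u t - q₀ / N) ^ 2 + ∑ t, (v t - q₀ / N) ^ 2)) := by
    rw [jointCost_eq, jointCost_eq, hu, hv,
      sum_sq_dev N u (q₀ / N) (by rw [hu, hq]),
      sum_sq_dev N v (q₀ / N) (by rw [hv, hq]),
      sum_sq_dev N (fun t => u t + v t) (2 * (q₀ / N))
        (by rw [sum_add_distrib, hu, hv]; linear_combination -2 * hq)]
    simp only [sum_const, card_univ, Fintype.card_fin, nsmul_eq_mul, hq]
    ring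
  have hs : 0 ≤ κ / 2 * ∑ t, (u t + v t - 2 * (q₀ / N)) ^ 2 := by positivity
  have hU : 0 ≤ ∑ t, (u t - q₀ / N) ^ 2 := by positivity
  have hV : 0 ≤ ∑ t, (v t - q₀ / N) ^ 2 := by positivity
  refine ⟨by rw [key]; nlinarith, fun h => ?_, fun ⟨h1, h2⟩ => by rw [h1, h2]⟩
  have h0 : α * (∑ t, (u t - q₀ / N) ^ 2 + ∑ t, (v t - q₀ / N) ^ 2) ≤ 0 := by linarith
  have h1 := nonpos_of_mul_nonpos_right h0 hα
  have hz : ∀ w : Fin N → ℝ, ∑ t, (w t - q₀ / N) ^ 2 ≤ 0 → w = fun _ => q₀ / N := by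
    intro w hw
    have h2 := (sum_eq_zero_iff_of_nonneg (fun t _ => sq_nonneg (w t - q₀ / N))).1
      (le_antisymm hw (by positivity))
    funext t
    exact sub_eq_zero.1 (pow_eq_zero_iff (two_ne_zero) |>.1 (h2 t (mem_univ t)))
  exact ⟨hz u (by linarith), hz v (by linarith)⟩
end

section
/- Fix N ≥ 1, q₀ ∈ ℝ, κ ≥ 0 and α > 0. Let A = {(u,v) ∈ ℝ^N × ℝ^N : Σ u_t = q₀, Σ v_t = q₀}, and define f₁(u,v) = Σ_{t=1}^N (κ u_t Σ_{j=1}^t (u_j + v_j) + α u_t²) and f₂(u,v) = Σ_{t=1}^N (κ v_t Σ_{j=1}^t (u_j + v_j) + α v_t²). Then the TWAP pair (c,c) with c_t = q₀/N is Pareto optimal: there is no (u,v) ∈ A with f₁(u,v) ≤ f₁(c,c) and f₂(u,v) ≤ f₂(c,c) and at least one inequality strict. -/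
open Finset

/-- Agent 1's expected implementation shortfall in the two-agent Almgren–Chriss game
(`Σ_{j=1}^t` encoded by the sum over `j ∈ Iic t`). -/
noncomputable def cost₁ (N : ℕ) (κ α : ℝ) (u v : Fin N → ℝ) : ℝ :=
  ∑ t : Fin N, (κ * u t * (∑ j ∈ Iic t, (u j + v j)) + α * (u t) ^ 2)

/-- Agent 2's expected implementation shortfall in the two-agent Almgren–Chriss game. -/
noncomputable def cost₂ (N : ℕ) (κ α : ℝ) (u v : Fin N → ℝ) : ℝ :=
  ∑ t : Fin N, (κ * v t * (∑ j ∈ Iic t, (u j + v j)) + α * (v t) ^ 2)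

theorem twap_aux_quad (N : ℕ) (w : Fin N → ℝ) :
    2 * ∑ t : Fin N, w t * ∑ j ∈ Iic t, w j = (∑ t, w t) ^ 2 + ∑ t, w t ^ 2 := by
  have h1 : ∑ t : Fin N, w t * ∑ j ∈ Iic t, w j
      = ∑ t : Fin N, ∑ j : Fin N, if j ≤ t then w t * w j else 0 := by
    refine Finset.sum_congr rfl fun t _ => ?_
    rw [← Finset.sum_filter, Finset.mul_sum]
    refine Finset.sum_congr ?_ fun _ _ => rfl
    ext j
    simp
  have h2 : ∑ t : Fin N, w t * ∑ j ∈ Iic t, w j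
      = ∑ t : Fin N, ∑ j : Fin N, if t ≤ j then w t * w j else 0 := by
    rw [h1, Finset.sum_comm]
    refine Finset.sum_congr rfl fun t _ => Finset.sum_congr rfl fun j _ => ?_
    rw [mul_comm]
  have h3 : ∑ t, w t ^ 2 = ∑ t : Fin N, ∑ j : Fin N, if t = j then w t * w j else 0 := by
    refine Finset.sum_congr rfl fun t _ => ?_
    simp [sq]
  rw [two_mul]
  nth_rewrite 1 [h1]
  rw [h2, h3, sq, Finset.sum_mul_sum, ← Finset.sum_add_distrib, ← Finset.sum_add_distrib]
  refine Finset.sum_congr rfl fun t _ => ?_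
  rw [← Finset.sum_add_distrib, ← Finset.sum_add_distrib]
  refine Finset.sum_congr rfl fun j _ => ?_
  rcases lt_trichotomy t j with h | h | h
  · simp [h.le, h.ne, not_le.mpr h]
  · simp [h]
  · simp [h.le, h.ne', not_le.mpr h]

theorem twap_aux_cost (N : ℕ) (κ α : ℝ) (u v : Fin N → ℝ) :
    cost₁ N κ α u v + cost₂ N κ α u v
      = κ / 2 * ((∑ t, u t + ∑ t, v t) ^ 2 + ∑ t, (u t + v t) ^ 2)
        + α * (∑ t, u t ^ 2 + ∑ t, v t ^ 2) := by
  have h := twap_aux_quad N (fun t => u t + v t)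
  simp only at h
  rw [Finset.sum_add_distrib (f := u) (g := v)] at h
  rw [← h]
  unfold cost₁ cost₂
  rw [← Finset.sum_add_distrib, ← Finset.sum_add_distrib, ← mul_assoc, Finset.mul_sum,
    Finset.mul_sum, ← Finset.sum_add_distrib]
  refine Finset.sum_congr rfl fun t _ => ?_
  ring

theorem twap_aux_sq (N : ℕ) (a : ℝ) (w : Fin N → ℝ) (h : ∑ t, w t = N * a) :
    ∑ _t : Fin N, a ^ 2 ≤ ∑ t, w t ^ 2 := by
  have h0 : 0 ≤ ∑ t, (w t - a) ^ 2 := Finset.sum_nonneg fun t _ => sq_nonneg _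
  have h1 : ∑ t, (w t - a) ^ 2 = ∑ t, w t ^ 2 - 2 * a * ∑ t, w t + N * a ^ 2 := by
    simp only [sub_sq, Finset.sum_add_distrib, Finset.sum_sub_distrib, Finset.mul_sum]
    simp
    exact Finset.sum_congr rfl fun t _ => by ring
  rw [h1, h] at h0
  simp
  nlinarith

/-- **The TWAP pair is a (collusive) Pareto optimum.** Fix `N ≥ 1`, `q₀ ∈ ℝ`, `κ ≥ 0`,
`α > 0`, and let `c_t = q₀/N`. There is no admissible pair `(u,v)` (with
`Σ u_t = q₀` and `Σ v_t = q₀`) such that `f₁(u,v) ≤ f₁(c,c)`, `f₂(u,v) ≤ f₂(c,c)`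
and at least one of the two inequalities is strict. -/
theorem twap_pareto_optimal (N : ℕ) (hN : 1 ≤ N) (q₀ κ α : ℝ)
    (hκ : 0 ≤ κ) (hα : 0 < α)
    (c : Fin N → ℝ) (hc : ∀ t, c t = q₀ / N) :
    ¬ ∃ u v : Fin N → ℝ, (∑ t, u t) = q₀ ∧ (∑ t, v t) = q₀ ∧
        cost₁ N κ α u v ≤ cost₁ N κ α c c ∧
        cost₂ N κ α u v ≤ cost₂ N κ α c c ∧
        (cost₁ N κ α u v < cost₁ N κ α c c ∨ cost₂ N κ α u v < cost₂ N κ α c c) := by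
  rintro ⟨u, v, hu, hv, h1, h2, h3⟩
  have hN0 : (N : ℝ) ≠ 0 := by
    have : N ≠ 0 := by omega
    exact_mod_cast this
  have hq : (N : ℝ) * (q₀ / N) = q₀ := by field_simp
  have hcc : c = fun _ => q₀ / N := funext hc
  have hcs : ∑ t, c t = q₀ := by rw [hcc]; simpa using hq
  have e1 := twap_aux_cost N κ α u v
  have e2 := twap_aux_cost N κ α c c
  rw [hu, hv] at e1
  rw [hcs] at e2
  have su := twap_aux_sq N (q₀ / N) u (by rw [hu, hq])
  have sv := twap_aux_sq N (q₀ / N) v (by rw [hv, hq])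
  have sw := twap_aux_sq N (q₀ / N + q₀ / N) (fun t => u t + v t)
    (by rw [Finset.sum_add_distrib, hu, hv, mul_add, hq])
  simp only [hc] at e2
  have k1 := mul_le_mul_of_nonneg_left sw (by positivity : 0 ≤ κ / 2)
  have k2 := mul_le_mul_of_nonneg_left (add_le_add su sv) hα.le
  have key : cost₁ N κ α c c + cost₂ N κ α c c ≤ cost₁ N κ α u v + cost₂ N κ α u v := by
    rw [e1, e2, mul_add, mul_add (κ / 2)]
    linarith
  rcases h3 with h3 | h3 <;> linarith
end

section
/- Fix N ≥ 1, q₀ ∈ ℝ and real κ, α with α ≥ κ ≥ 0 and α > 0. Define G(u,v) = Σ_{t=1}^N (κ u_t Σ_{j=1}^{t-1} (u_j + v_j) + α u_t²) + Σ_{t=1}^N (κ v_t Σ_{j=1}^{t-1} (u_j + v_j) + α v_t²), where the inner sum over j is empty for t = 1. Then for every (u,v) with Σ u_t = Σ v_t = q₀ one has G(u,v) ≥ G(c,c), where c_t = q₀/N; moreover, if α > κ, then (c,c) is the unique minimizer. -/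
open Finset

/-- The joint expected implementation shortfall of the two agents under the
strict-predecessor impact convention: the inner sum `Σ_{j=1}^{t-1}` (empty for `t = 1`)
is encoded by the sum over `j ∈ Iio t` for `t : Fin N`. -/
noncomputable def jointCostPred (N : ℕ) (κ α : ℝ) (u v : Fin N → ℝ) : ℝ :=
  (∑ t : Fin N, (κ * u t * (∑ j ∈ Iio t, (u j + v j)) + α * (u t) ^ 2)) +
  (∑ t : Fin N, (κ * v t * (∑ j ∈ Iio t, (u j + v j)) + α * (v t) ^ 2))

theorem two_mul_sum_Iio (N : ℕ) (w : Fin N → ℝ) :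
    2 * ∑ t, w t * ∑ j ∈ Iio t, w j = (∑ t, w t) ^ 2 - ∑ t, w t ^ 2 := by
  have h1 : ∀ t : Fin N, w t * ∑ j ∈ Iio t, w j = ∑ j, if j < t then w t * w j else 0 := by
    intro t
    rw [Finset.mul_sum, ← Finset.sum_filter]
    congr 1
    ext j
    simp
  have h2 : ∑ t, w t * ∑ j ∈ Iio t, w j = ∑ t, ∑ j, if j < t then w t * w j else 0 :=
    Finset.sum_congr rfl fun t _ => h1 t
  have h3 : ∑ t, w t * ∑ j ∈ Iio t, w j = ∑ t, ∑ j, if t < j then w t * w j else 0 := by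
    rw [h2, Finset.sum_comm]
    refine Finset.sum_congr rfl fun t _ => Finset.sum_congr rfl fun j _ => ?_
    rw [mul_comm]
  have h4 : ∑ t, w t ^ 2 = ∑ t, ∑ j, if t = j then w t * w j else 0 := by
    refine Finset.sum_congr rfl fun t _ => ?_
    simp [sq]
  rw [two_mul]
  nth_rewrite 1 [h2]
  rw [h3, h4, sq, Finset.sum_mul_sum, eq_sub_iff_add_eq, ← Finset.sum_add_distrib,
    ← Finset.sum_add_distrib]
  refine Finset.sum_congr rfl fun t _ => ?_
  rw [← Finset.sum_add_distrib, ← Finset.sum_add_distrib]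
  refine Finset.sum_congr rfl fun j _ => ?_
  rcases lt_trichotomy t j with h | h | h
  · simp [h, h.not_gt, h.ne]
  · simp [h]
  · simp [h, h.not_gt, h.ne']

theorem jointCostPred_eq (N : ℕ) (hN : 1 ≤ N) (q κ α : ℝ) (u v : Fin N → ℝ)
    (hu : ∑ t, u t = q) (hv : ∑ t, v t = q) :
    jointCostPred N κ α u v = 2 * κ * q ^ 2 + 2 * (α - κ) * (q ^ 2 / N)
      + (α - κ) * ∑ t, ((u t - q / N) ^ 2 + (v t - q / N) ^ 2)
      + κ / 2 * ∑ t, (u t - v t) ^ 2 := by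
  have hN' : (N : ℝ) ≠ 0 := by positivity
  have hw := two_mul_sum_Iio N (fun t => u t + v t)
  simp only [Finset.sum_add_distrib (f := u) (g := v) (s := Finset.univ), hu, hv] at hw
  have h1 : jointCostPred N κ α u v = κ * (∑ t, (u t + v t) * ∑ j ∈ Iio t, (u j + v j))
      + α * ∑ t, u t ^ 2 + α * ∑ t, v t ^ 2 := by
    unfold jointCostPred
    simp only [Finset.mul_sum _ _ κ, Finset.mul_sum _ _ α, ← Finset.sum_add_distrib]
    refine Finset.sum_congr rfl fun t _ => ?_
    ring
  have h2 : ∑ t, ((u t - q / N) ^ 2 + (v t - q / N) ^ 2)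
      = ∑ t, u t ^ 2 + ∑ t, v t ^ 2 - 2 * (q ^ 2 / N) := by
    have : ∀ t, (u t - q / N) ^ 2 + (v t - q / N) ^ 2
      = u t ^ 2 + v t ^ 2 - (2 * (q / N)) * u t - (2 * (q / N)) * v t + 2 * (q / N) ^ 2 := by
      intro t; ring
    simp only [this, Finset.sum_add_distrib, Finset.sum_sub_distrib, ← Finset.mul_sum, hu, hv,
      Finset.sum_const, Finset.card_univ, Fintype.card_fin, nsmul_eq_mul]
    field_simp
    ring
  have h3 : ∑ t, (u t - v t) ^ 2
      = 2 * ∑ t, u t ^ 2 + 2 * ∑ t, v t ^ 2 - ∑ t, (u t + v t) ^ 2 := by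
    simp only [Finset.mul_sum, ← Finset.sum_add_distrib, ← Finset.sum_sub_distrib]
    refine Finset.sum_congr rfl fun t _ => ?_
    ring
  rw [h1, h2, h3]
  linear_combination (κ / 2) * hw

/-- **Pareto optimal strategy under the strict-predecessor convention.**
Fix `N ≥ 1`, `q₀ ∈ ℝ` and `α ≥ κ ≥ 0` with `α > 0`. Then for every pair `(u,v)` with
`Σ u_t = Σ v_t = q₀` one has `G(u,v) ≥ G(c,c)`, where `c_t = q₀/N` is the TWAP vector;
moreover, if `α > κ`, the TWAP pair is the unique minimizer. -/
theorem twap_min_pred (N : ℕ) (hN : 1 ≤ N) (q₀ κ α : ℝ)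
    (hκ : 0 ≤ κ) (hκα : κ ≤ α) (hα : 0 < α)
    (c : Fin N → ℝ) (hc : ∀ t, c t = q₀ / N) :
    (∀ u v : Fin N → ℝ, (∑ t, u t) = q₀ → (∑ t, v t) = q₀ →
        jointCostPred N κ α c c ≤ jointCostPred N κ α u v) ∧
    (κ < α → ∀ u v : Fin N → ℝ, (∑ t, u t) = q₀ → (∑ t, v t) = q₀ →
        jointCostPred N κ α u v = jointCostPred N κ α c c → u = c ∧ v = c) := by
  have hN' : (N : ℝ) ≠ 0 := by positivity
  obtain rfl : c = fun _ => q₀ / N := funext hc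
  have hcs : ∑ _t : Fin N, q₀ / (N : ℝ) = q₀ := by
    simp only [Finset.sum_const, Finset.card_univ, Fintype.card_fin, nsmul_eq_mul]
    field_simp
  have hcc := jointCostPred_eq N hN q₀ κ α _ _ hcs hcs
  simp only [sub_self, ne_eq, OfNat.ofNat_ne_zero, not_false_eq_true, zero_pow, add_zero,
    Finset.sum_const_zero, mul_zero] at hcc
  have hnn : ∀ u v : Fin N → ℝ, 0 ≤ κ / 2 * ∑ t, (u t - v t) ^ 2 := fun u v => by positivity
  have hnn2 : ∀ u v : Fin N → ℝ, 0 ≤ ∑ t, ((u t - q₀ / N) ^ 2 + (v t - q₀ / N) ^ 2) :=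
    fun u v => by positivity
  refine ⟨fun u v hu hv => ?_, fun hlt u v hu hv h => ?_⟩
  · rw [hcc, jointCostPred_eq N hN q₀ κ α u v hu hv]
    have := mul_nonneg (sub_nonneg.2 hκα) (hnn2 u v)
    linarith [hnn u v]
  · rw [hcc, jointCostPred_eq N hN q₀ κ α u v hu hv] at h
    have h0 : (α - κ) * ∑ t, ((u t - q₀ / N) ^ 2 + (v t - q₀ / N) ^ 2) = 0 := by
      have := mul_nonneg (sub_nonneg.2 hκα) (hnn2 u v)
      linarith [hnn u v]
    have h5 := (mul_eq_zero.1 h0).resolve_left (sub_pos.2 hlt).ne'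
    rw [Finset.sum_eq_zero_iff_of_nonneg (fun t _ => by positivity)] at h5
    constructor <;> funext t <;> have h6 := h5 t (Finset.mem_univ t) <;>
      nlinarith [sq_nonneg (u t - q₀ / N), sq_nonneg (v t - q₀ / N),
        pow_eq_zero_iff (two_ne_zero) |>.1 (le_antisymm (by nlinarith [sq_nonneg (u t - q₀ / N), sq_nonneg (v t - q₀ / N)]) (sq_nonneg (u t - q₀ / N))),
        pow_eq_zero_iff (two_ne_zero) |>.1 (le_antisymm (by nlinarith [sq_nonneg (u t - q₀ / N), sq_nonneg (v t - q₀ / N)]) (sq_nonneg (v t - q₀ / N)))]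
end
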